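/- arXiv:1301.1235 — 2 statements merged into one kernel-verified Lean document; each statement's English description precedes it below -/
import Mathlib

section
/- Two real polynomials g and h, each of degree at least 1, are equivalent if and only if their adjusted representations coincide: g̃ = h̃. -/
/-!
Translation `p ↦ p(· + r)` is Mathlib's `Polynomial.taylor r`, an additive action of `ℝ`, and
`adjRep g` is the translate of `g` by `-adjShift g`. The key fact is `adjShift_taylor`: translating
a nonconstant polynomial by `r` adds exactly `r` to its shift, because the leading coefficient
`c_k` is unchanged while the next coefficient becomes `c_{k-1} + k c_k r`. Hence `adjRep` is
constant on equivalence classes. Conversely, a polynomial is a translate of its adjusted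
representation, so equal adjusted representations force `g` and `h` to be translates of each other.
-/

open Polynomial

noncomputable section

/-- Two polynomials are equivalent if `f(·) = g(· + δ)` for some `δ ∈ ℝ`. -/
def PolyEquiv (f g : Polynomial ℝ) : Prop :=
  ∃ δ : ℝ, ∀ x : ℝ, f.eval x = g.eval (x + δ)

/-- The shift making a polynomial `g = ∑ a_i t^i/i!` of degree `k` adjusted
(i.e. killing the coefficient `a_{k−1}`), namely `a_{k−1}/a_k = coeff_{k−1}/(k·coeff_k)`. -/
def adjShift (g : Polynomial ℝ) : ℝ :=
  g.coeff (g.natDegree - 1) / ((g.natDegree : ℝ) * g.leadingCoeff)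

/-- The adjusted representation `g̃(·) = g(· − a_{k−1}/a_k)` of a polynomial `g`. -/
def adjRep (g : Polynomial ℝ) : Polynomial ℝ :=
  g.comp (Polynomial.X - Polynomial.C (adjShift g))

lemma polyEquiv_iff_taylor (g h : Polynomial ℝ) :
    PolyEquiv g h ↔ ∃ δ : ℝ, g = taylor δ h := by
  refine exists_congr fun δ => ⟨fun H => Polynomial.funext fun x => ?_, ?_⟩
  · rw [H, taylor_eval]
  · rintro rfl x
    rw [taylor_eval]

lemma adjRep_eq_taylor (g : Polynomial ℝ) : adjRep g = taylor (-adjShift g) g := by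
  rw [adjRep, taylor_apply, C_neg, sub_eq_add_neg]

lemma coeff_taylor_natDegree_sub_one (p : Polynomial ℝ) (hp : 1 ≤ p.natDegree) (r : ℝ) :
    (taylor r p).coeff (p.natDegree - 1) =
      p.coeff (p.natDegree - 1) + p.natDegree * p.leadingCoeff * r := by
  -- The Taylor coefficient is the Hasse derivative of order `k - 1` at `r`, which is affine in `r`.
  have hdeg : (hasseDeriv (p.natDegree - 1) p).natDegree < 2 :=
    (natDegree_hasseDeriv_le p _).trans_lt (by omega)
  have hk : 1 + (p.natDegree - 1) = p.natDegree := by omega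
  have hc : p.natDegree.choose (p.natDegree - 1) = p.natDegree := by
    rw [Nat.choose_symm hp, Nat.choose_one_right]
  rw [taylor_coeff, eval_eq_sum_range' hdeg]
  simp [Finset.sum_range_succ, hasseDeriv_coeff, hk, hc]

/-- The shift is equivariant under translation of a nonconstant polynomial. -/
lemma adjShift_taylor (p : Polynomial ℝ) (hp : 1 ≤ p.natDegree) (r : ℝ) :
    adjShift (taylor r p) = adjShift p + r := by
  have hk : (p.natDegree : ℝ) ≠ 0 := by exact_mod_cast (by omega : p.natDegree ≠ 0)
  have hl : p.leadingCoeff ≠ 0 := by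
    rw [leadingCoeff_ne_zero]
    rintro rfl
    simp at hp
  rw [adjShift, adjShift, natDegree_taylor, leadingCoeff_taylor,
    coeff_taylor_natDegree_sub_one p hp]
  field_simp

/-- Lemma 4.5. Two real polynomials of degree at least 1 are
equivalent iff their adjusted representations coincide. -/
theorem polyEquiv_iff_adjRep_eq (g h : Polynomial ℝ)
    (hg : 1 ≤ g.natDegree) (hh : 1 ≤ h.natDegree) :
    PolyEquiv g h ↔ adjRep g = adjRep h := by
  rw [polyEquiv_iff_taylor, adjRep_eq_taylor, adjRep_eq_taylor]
  constructor
  · rintro ⟨δ, rfl⟩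
    rw [adjShift_taylor h hh, taylor_taylor]
    congr 2
    ring
  · intro H
    refine ⟨adjShift g - adjShift h, taylor_injective (-adjShift g) ?_⟩
    rw [H, taylor_taylor]
    congr 2
    ring
end
end

section
/- Assume the vertex c is controllable. Then for each value b ∈ B_d^d, both ∑_{v∈D^d : b_{vd}=b} x_v ∂_{p_v} ∈ 𝓜 and ∑_{v∈D^d : b_{vd}=b} ∂_{p_v} ∈ 𝓜. Consequently, ∑_{v∈D^d} x_v ∂_{p_v} ∈ 𝓜 and ∑_{v∈D^d} ∂_{p_v} ∈ 𝓜. -/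
/-!
Write `β_v` for the `d`-th derivative of `V''_{cv}` (a constant, nonzero exactly for `v ∈ D^d`),
with `β_v = 0` off the neighbourhood of `c`.

Up to a multiple of `∂_{p_c}`, the bracket `[∂_{q_c}, X₀]` equals `∑_v V''_{cv}(q_c - q_v) ∂_{p_v}`,
and each further bracket with `∂_{q_c}` differentiates the coefficients once. After `d - 1` of them
one gets `Z = ∑_v (β_v x_v + e_v) ∂_{p_v} ∈ 𝓜`, where `β_v e_v = 0` because the polynomials are
adjusted in the variable `x_v` (`exists_affine_data`, `derivField_mem`).

Let `W = [Z, X₀]`. For any affine field, `[∑_v (a_v x_v + e'_v) ∂_{p_v}, W]` equals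
`∑_v (2 β_v a_v x_v + β_v e'_v + a_v e_v) ∂_{p_v}` (`lieB_affField_driftField`). Starting from `Z` and
using `β_v e_v = 0`, this yields `∑_v β_v ^ k x_v ∂_{p_v} ∈ 𝓜` for all `k ≥ 2`. Lagrange interpolation
on the values of `β` then gives `∑_v φ(β_v) x_v ∂_{p_v} ∈ 𝓜` for each `φ` with `φ 0 = 0`
(`affField_comp_mem`), and a bracket with `∂_{q_c}` gives `∑_v φ(β_v) ∂_{p_v} ∈ 𝓜`. Indicator functions
`φ` give the theorem.
-/

open scoped Classical
open Polynomial

noncomputable section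

/-- Phase space ℝ^{2|V|}: positions `q = x.1` and momenta `p = x.2`. -/
abbrev Phase (V : Type) := (V → ℝ) × (V → ℝ)

/-- Lie bracket of vector fields: `[Y,Z](x) = DZ(x)·Y(x) − DY(x)·Z(x)`. -/
def lieB {V : Type} [Fintype V] (Y Z : Phase V → Phase V) : Phase V → Phase V :=
  fun x => fderiv ℝ Z x (Y x) - fderiv ℝ Y x (Z x)

/-- The constant vector field `∂_{p_v}`. -/
def dp {V : Type} [Fintype V] [DecidableEq V] (v : V) : Phase V → Phase V :=
  fun _ => (0, Pi.single v 1)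

/-- The constant vector field `∂_{q_v}`. -/
def dq {V : Type} [Fintype V] [DecidableEq V] (v : V) : Phase V → Phase V :=
  fun _ => (Pi.single v 1, 0)

/-- The constant vector field `∑_{v ∈ A} ∂_{p_v}`. -/
def dpSum {V : Type} [Fintype V] [DecidableEq V] (A : Finset V) : Phase V → Phase V :=
  fun _ => (0, ∑ v ∈ A, Pi.single v 1)

/-- The constant vector field `∑_{v ∈ A} ∂_{q_v}`. -/
def dqSum {V : Type} [Fintype V] [DecidableEq V] (A : Finset V) : Phase V → Phase V :=
  fun _ => (∑ v ∈ A, Pi.single v 1, 0)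

/-- The drift vector field
`X₀ = −∑_{v∈V*} γ_v p_v ∂_{p_v} + ∑_{v∈V} (p_v ∂_{q_v} − U_v'(q_v) ∂_{p_v})
      − ∑_{{u,v}∈E} V_{uv}'(q_u − q_v)(∂_{p_u} − ∂_{p_v})`,
written componentwise (using the symmetry `V_{vu}(x) = V_{uv}(−x)` of the
interaction potentials, the `∂_{p_v}`-component of the edge term at a vertex `v` is
`−∑_{w ~ v} V_{vw}'(q_v − q_w)`). -/
def X0 {V : Type} [Fintype V] [DecidableEq V] (G : SimpleGraph V) [DecidableRel G.Adj]
    (γ : V → ℝ) (U : V → ℝ → ℝ) (Vp : V → V → Polynomial ℝ) : Phase V → Phase V :=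
  fun x =>
    (x.2, fun v =>
      -(γ v) * x.2 v - deriv (U v) (x.1 v) -
        ∑ w ∈ Finset.univ.filter (fun w => G.Adj v w),
          (derivative (Vp v w)).eval (x.1 v - x.1 w))

/-- The smallest collection `𝓜` of vector fields on `ℝ^{2|V|}` that contains `∂_{p_v}`
for every `v ∈ V*`, and is closed under linear combinations, Lie brackets,
bracketing with `X₀`, and multiplication by smooth scalar functions. -/
inductive MM {V : Type} [Fintype V] [DecidableEq V] (Vstar : Finset V)
    (X₀ : Phase V → Phase V) : (Phase V → Phase V) → Prop
  | basic (v : V) (hv : v ∈ Vstar) : MM Vstar X₀ (dp v)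
  | add {Y Z : Phase V → Phase V} : MM Vstar X₀ Y → MM Vstar X₀ Z → MM Vstar X₀ (Y + Z)
  | smul (a : ℝ) {Y : Phase V → Phase V} : MM Vstar X₀ Y → MM Vstar X₀ (a • Y)
  | lie {Y Z : Phase V → Phase V} : MM Vstar X₀ Y → MM Vstar X₀ Z → MM Vstar X₀ (lieB Y Z)
  | lieX {Y : Phase V → Phase V} : MM Vstar X₀ Y → MM Vstar X₀ (lieB Y X₀)
  | mulS (f : Phase V → ℝ) (hf : ContDiff ℝ (⊤ : ℕ∞) f) {Y : Phase V → Phase V} :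
      MM Vstar X₀ Y → MM Vstar X₀ (fun x => f x • Y x)

/-- A vertex `v` is controllable if `∂_{q_v} ∈ 𝓜` and `∂_{p_v} ∈ 𝓜`. -/
def Controllable {V : Type} [Fintype V] [DecidableEq V] (Vstar : Finset V)
    (X₀ : Phase V → Phase V) (v : V) : Prop :=
  MM Vstar X₀ (dq v) ∧ MM Vstar X₀ (dp v)

/-- The set 𝒯 of neighbors ("targets") of a vertex `c`. -/
def Tset {V : Type} [Fintype V] [DecidableEq V] (G : SimpleGraph V) [DecidableRel G.Adj]
    (c : V) : Finset V :=
  Finset.univ.filter fun w => G.Adj c w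

/-- `f̃_v`, the adjusted representation of `V''_{cv}`. -/
def ft {V : Type} (Vp : V → V → Polynomial ℝ) (c v : V) : Polynomial ℝ :=
  adjRep (derivative (derivative (Vp c v)))

/-- `d = max_{v∈𝒯} d_v`, the maximal degree of the adjusted polynomials `f̃_v`, `v ∈ 𝒯`. -/
def dmax {V : Type} [Fintype V] [DecidableEq V] (G : SimpleGraph V) [DecidableRel G.Adj]
    (Vp : V → V → Polynomial ℝ) (c : V) : ℕ :=
  (Tset G c).sup fun v => (ft Vp c v).natDegree

/-- `D^d = {v ∈ 𝒯 : d_v = d}`, the neighbors of `c` of maximal adjusted degree. -/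
def Dd {V : Type} [Fintype V] [DecidableEq V] (G : SimpleGraph V) [DecidableRel G.Adj]
    (Vp : V → V → Polynomial ℝ) (c : V) : Finset V :=
  (Tset G c).filter fun v => (ft Vp c v).natDegree = dmax G Vp c

/-- The coefficient `b_{vℓ}` in `f̃_v(x) = ∑_j b_{vj} x^j/j!`, i.e. `b_{vℓ} = ℓ!·coeff_ℓ(f̃_v)`. -/
def bcoef {V : Type} (Vp : V → V → Polynomial ℝ) (c v : V) (ℓ : ℕ) : ℝ :=
  (Nat.factorial ℓ : ℝ) * (ft Vp c v).coeff ℓ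

/-- The scalar function `x_v = q_c − q_v + δ_{cv}`, with `δ_{cv}` the adjusting shift
of `V''_{cv}`. -/
def xv {V : Type} [Fintype V] (Vp : V → V → Polynomial ℝ) (c v : V) : Phase V → ℝ :=
  fun x => x.1 c - x.1 v + adjShift (derivative (derivative (Vp c v)))

/-! ### Affine vector fields and their brackets -/

/-- The vector field `∑_v (a_v (q_c - q_v + δ_v) + e_v) ∂_{p_v}`. -/
def affField {V : Type} (c : V) (δ a e : V → ℝ) : Phase V → Phase V :=
  fun x => (0, fun v => a v * (x.1 c - x.1 v + δ v) + e v)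

/-- The bracket of `affField c δ a e` with the drift, in closed form (see `lieB_affField_X0`). -/
def driftField {V : Type} (c : V) (γ δ a e : V → ℝ) : Phase V → Phase V :=
  fun x => (fun v => a v * (x.1 c - x.1 v + δ v) + e v,
    fun v => -(γ v) * (a v * (x.1 c - x.1 v + δ v) + e v) - a v * (x.2 c - x.2 v))

/-- The vector field `∑_{v ~ c} f_v(q_c - q_v) ∂_{p_v}`. -/
def polyField {V : Type} (G : SimpleGraph V) (c : V) (f : V → Polynomial ℝ) : Phase V → Phase V :=
  fun x => (0, fun v => if G.Adj c v then (f v).eval (x.1 c - x.1 v) else 0)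

lemma fderiv_apply_eq_of_line {E F : Type*} [NormedAddCommGroup E] [NormedSpace ℝ E]
    [NormedAddCommGroup F] [NormedSpace ℝ F] {Z : E → F} {x w : E} {z : F}
    (hZ : DifferentiableAt ℝ Z x) (h : HasDerivAt (fun t : ℝ => Z (x + t • w)) z 0) :
    fderiv ℝ Z x w = z := by
  rw [← hZ.lineDeriv_eq_fderiv]
  exact h.deriv

lemma fderiv_apply_eq_of_affine {E F : Type*} [NormedAddCommGroup E] [NormedSpace ℝ E]
    [NormedAddCommGroup F] [NormedSpace ℝ F] {Z : E → F} {x w : E} {z : F}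
    (hZ : DifferentiableAt ℝ Z x) (h : ∀ t : ℝ, Z (x + t • w) = Z x + t • z) :
    fderiv ℝ Z x w = z := by
  refine fderiv_apply_eq_of_line hZ ?_
  simp_rw [h]
  simpa using ((hasDerivAt_id (0 : ℝ)).smul_const z).const_add (Z x)

section Brackets

variable {V : Type} [Fintype V]

lemma differentiable_affField (c : V) (δ a e : V → ℝ) :
    Differentiable ℝ (affField c δ a e) := by
  unfold affField
  fun_prop

lemma differentiable_driftField (c : V) (γ δ a e : V → ℝ) :
    Differentiable ℝ (driftField c γ δ a e) := by
  unfold driftField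
  fun_prop

lemma differentiable_polyField (G : SimpleGraph V) (c : V) (f : V → Polynomial ℝ) :
    Differentiable ℝ (polyField G c f) := by
  unfold polyField
  refine Differentiable.prodMk (by fun_prop) (differentiable_pi.2 fun v => ?_)
  split_ifs
  · exact (f v).differentiable.comp (by fun_prop)
  · fun_prop

variable [DecidableEq V]

lemma contDiff_X0 (G : SimpleGraph V) [DecidableRel G.Adj] (γ : V → ℝ) (U : V → ℝ → ℝ)
    (Vp : V → V → Polynomial ℝ) (hU : ∀ v, ContDiff ℝ (⊤ : ℕ∞) (U v)) :
    ContDiff ℝ (⊤ : ℕ∞) (X0 G γ U Vp) := by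
  unfold X0
  refine contDiff_snd.prodMk (contDiff_pi.2 fun v => ?_)
  have h1 : ContDiff ℝ (⊤ : ℕ∞) (deriv (U v)) := (contDiff_infty_iff_deriv.1 (hU v)).2
  have h2 : ContDiff ℝ (⊤ : ℕ∞) (fun x : Phase V => deriv (U v) (x.1 v)) :=
    h1.comp (by fun_prop)
  refine ContDiff.sub (ContDiff.sub (by fun_prop) h2) (ContDiff.sum fun w _ => ?_)
  have h3 : ContDiff ℝ (⊤ : ℕ∞) (fun y : ℝ => (derivative (Vp v w)).eval y) :=
    by simpa using (derivative (Vp v w)).contDiff_aeval (𝕜 := ℝ) (⊤ : ℕ∞)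
  exact h3.comp (by fun_prop : ContDiff ℝ (⊤ : ℕ∞) fun x : Phase V => x.1 v - x.1 w)

lemma fderiv_affField (c : V) (δ a e : V → ℝ) (x w : Phase V) :
    fderiv ℝ (affField c δ a e) x w = (0, fun v => a v * (w.1 c - w.1 v)) := by
  refine fderiv_apply_eq_of_affine (differentiable_affField c δ a e x) fun t => ?_
  ext v
  · simp [affField]
  · simp [affField]; ring

lemma fderiv_driftField (c : V) (γ δ a e : V → ℝ) (x w : Phase V) :
    fderiv ℝ (driftField c γ δ a e) x w = (fun v => a v * (w.1 c - w.1 v),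
      fun v => -(γ v) * (a v * (w.1 c - w.1 v)) - a v * (w.2 c - w.2 v)) := by
  refine fderiv_apply_eq_of_affine (differentiable_driftField c γ δ a e x) fun t => ?_
  ext v
  · simp [driftField]; ring
  · simp [driftField]; ring

/-- Along a momentum direction the drift is affine, with only the friction contributing to the
momentum component. -/
lemma fderiv_X0_momentum (G : SimpleGraph V) [DecidableRel G.Adj] (γ : V → ℝ) (U : V → ℝ → ℝ)
    (Vp : V → V → Polynomial ℝ) (hU : ∀ v, ContDiff ℝ (⊤ : ℕ∞) (U v)) (x : Phase V) (w : V → ℝ) :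
    fderiv ℝ (X0 G γ U Vp) x (0, w) = (w, fun v => -(γ v) * w v) := by
  refine fderiv_apply_eq_of_affine
    (((contDiff_X0 G γ U Vp hU).differentiable (by simp)) x) fun t => ?_
  ext v
  · simp [X0]
  · simp [X0]; ring

lemma lieB_affField_X0 (G : SimpleGraph V) [DecidableRel G.Adj] (γ : V → ℝ) (U : V → ℝ → ℝ)
    (Vp : V → V → Polynomial ℝ) (hU : ∀ v, ContDiff ℝ (⊤ : ℕ∞) (U v)) (c : V) (δ a e : V → ℝ) :
    lieB (affField c δ a e) (X0 G γ U Vp) = driftField c γ δ a e := by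
  funext x
  have h : affField c δ a e x = (0, (affField c δ a e x).2) := rfl
  unfold lieB
  rw [fderiv_affField, h, fderiv_X0_momentum G γ U Vp hU]
  ext v
  · simp [affField, driftField]
  · simp [affField, driftField, X0]

/-- The bracket producing higher powers of `β`: the vanishing at `c` of all coefficients makes the
`v`-components decouple. -/
lemma lieB_affField_driftField (c : V) (γ δ a e β e₀ : V → ℝ)
    (hac : a c = 0) (hec : e c = 0) (hβc : β c = 0) (he₀c : e₀ c = 0) :
    lieB (affField c δ a e) (driftField c γ δ β e₀) =
      affField c δ (fun v => 2 * β v * a v) (fun v => β v * e v + a v * e₀ v) := by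
  funext x
  unfold lieB
  rw [fderiv_affField, fderiv_driftField]
  ext v
  · simp [affField]
  · simp [affField, driftField, hac, hec, hβc, he₀c]; ring

lemma lieB_dq_affField (c : V) (δ a e : V → ℝ) (hac : a c = 0) :
    lieB (dq c) (affField c δ a e) = fun _ => (0, a) := by
  funext x
  have h : fderiv ℝ (dq c) x = 0 := by unfold dq; simp
  unfold lieB
  rw [fderiv_affField, h]
  ext v
  · simp
  · by_cases hv : v = c
    · subst hv; simp [hac]
    · simp [dq, hv]

lemma lieB_dq_polyField (G : SimpleGraph V) (c : V) (f : V → Polynomial ℝ) :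
    lieB (dq c) (polyField G c f) = polyField G c (fun v => derivative (f v)) := by
  funext x
  have h : fderiv ℝ (dq c) x = 0 := by unfold dq; simp
  unfold lieB
  rw [h]
  simp only [zero_apply, sub_zero]
  refine fderiv_apply_eq_of_line (differentiable_polyField G c f x) ?_
  unfold polyField
  refine (hasDerivAt_const _ _).prodMk (hasDerivAt_pi.2 fun v => ?_)
  split_ifs with hv
  · have hne : v ≠ c := hv.ne'
    have h1 : HasDerivAt (fun t : ℝ => x.1 c - x.1 v + t) 1 0 :=
      (hasDerivAt_id (0 : ℝ)).const_add _
    have h2 : HasDerivAt (fun y : ℝ => (f v).eval y) ((derivative (f v)).eval (x.1 c - x.1 v))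
        (x.1 c - x.1 v + 0) := by
      simpa using (f v).hasDerivAt (x.1 c - x.1 v + 0)
    have h3 := h2.comp (0 : ℝ) h1
    rw [mul_one] at h3
    refine h3.congr_of_eventuallyEq (Filter.Eventually.of_forall fun t => ?_)
    simp [dq, hne]
    congr 1
    ring
  · exact hasDerivAt_const _ _

/-- Away from the vertex `c` itself, `[∂_{q_c}, X₀]` has momentum components `V''_{cv}(q_c - q_v)`
at the neighbours `v` of `c` and zero elsewhere. -/
lemma fderiv_X0_dq (G : SimpleGraph V) [DecidableRel G.Adj] (γ : V → ℝ) (U : V → ℝ → ℝ)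
    (Vp : V → V → Polynomial ℝ) (hU : ∀ v, ContDiff ℝ (⊤ : ℕ∞) (U v))
    (hsym : ∀ u v, G.Adj u v → ∀ x : ℝ, (Vp v u).eval x = (Vp u v).eval (-x))
    (c : V) (x : Phase V) :
    (fderiv ℝ (X0 G γ U Vp) x (dq c x)).1 = 0 ∧
    ∀ v, v ≠ c → (fderiv ℝ (X0 G γ U Vp) x (dq c x)).2 v =
      (polyField G c (fun v => derivative (derivative (Vp c v))) x).2 v := by
  have hd : DifferentiableAt ℝ (X0 G γ U Vp) x :=
    ((contDiff_X0 G γ U Vp hU).differentiable (by simp)) x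
  have hline : HasDerivAt (fun t : ℝ => X0 G γ U Vp (x + t • dq c x))
      (fderiv ℝ (X0 G γ U Vp) x (dq c x)) 0 := by
    exact hd.hasFDerivAt.hasLineDerivAt (dq c x)
  constructor
  · have h1 := (hasFDerivAt_fst (𝕜 := ℝ) (p := X0 G γ U Vp (x + (0 : ℝ) • dq c x))).comp_hasDerivAt
      (0 : ℝ) hline
    have h2 : HasDerivAt (Prod.fst ∘ fun t : ℝ => X0 G γ U Vp (x + t • dq c x)) 0 0 := by
      have : (Prod.fst ∘ fun t : ℝ => X0 G γ U Vp (x + t • dq c x)) = fun _ => x.2 := by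
        funext t; simp [X0, dq]
      rw [this]; exact hasDerivAt_const _ _
    exact h1.unique h2
  · intro v hv
    have h1 := (hasFDerivAt_snd (𝕜 := ℝ) (p := X0 G γ U Vp (x + (0 : ℝ) • dq c x))).comp_hasDerivAt
      (0 : ℝ) hline
    have h1 := hasDerivAt_pi.1 h1 v
    refine h1.unique ?_
    have hterm : ∀ w ∈ Finset.univ.filter (fun w => G.Adj v w),
        HasDerivAt (fun t : ℝ => (derivative (Vp v w)).eval
            ((x + t • dq c x).1 v - (x + t • dq c x).1 w))
          (if w = c then -(derivative (derivative (Vp v w))).eval (x.1 v - x.1 w) else 0) 0 := by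
      intro w _
      split_ifs with hw
      · subst hw
        have h1 : HasDerivAt (fun t : ℝ => x.1 v - x.1 w - t) (-1) 0 :=
          (hasDerivAt_id (0 : ℝ)).const_sub _
        have h2 : HasDerivAt (fun y : ℝ => (derivative (Vp v w)).eval y)
            ((derivative (derivative (Vp v w))).eval (x.1 v - x.1 w)) (x.1 v - x.1 w - 0) := by
          simpa using (derivative (Vp v w)).hasDerivAt (x.1 v - x.1 w - 0)
        have h3 := h2.comp (0 : ℝ) h1
        rw [mul_neg_one] at h3
        refine h3.congr_of_eventuallyEq (Filter.Eventually.of_forall fun t => ?_)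
        simp [dq, hv]
        congr 1
        ring
      · refine (hasDerivAt_const (0 : ℝ) ((derivative (Vp v w)).eval
          (x.1 v - x.1 w))).congr_of_eventuallyEq (Filter.Eventually.of_forall fun t => ?_)
        simp [dq, hv, hw]
    have hsum := HasDerivAt.fun_sum hterm
    have hval : -∑ w ∈ Finset.univ.filter (fun w => G.Adj v w),
        (if w = c then -(derivative (derivative (Vp v w))).eval (x.1 v - x.1 w) else 0) =
        (polyField G c (fun v => derivative (derivative (Vp c v))) x).2 v := by
      rw [Finset.sum_ite_eq']
      simp only [polyField, Finset.mem_filter, Finset.mem_univ, true_and, G.adj_comm v c]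
      split_ifs with hcv
      · have hp : Vp v c = (Vp c v).comp (-X) := by
          refine Polynomial.funext fun y => ?_
          rw [hsym c v hcv y]
          simp
        rw [hp]
        simp [derivative_comp]
      · simp
    rw [← hval]
    have hconst : HasDerivAt (fun _ : ℝ => -(γ v) * x.2 v - deriv (U v) (x.1 v)) 0 0 :=
      hasDerivAt_const _ _
    have := hconst.sub hsum
    rw [zero_sub] at this
    refine this.congr_of_eventuallyEq (Filter.Eventually.of_forall fun t => ?_)
    simp [X0, dq, hv]

end Brackets

/-! ### Membership in `𝓜` -/

section Membership

variable {V : Type} [Fintype V] [DecidableEq V] {Vstar : Finset V} {X₀ : Phase V → Phase V}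

lemma MM.zero_mem {Y : Phase V → Phase V} (hY : MM Vstar X₀ Y) : MM Vstar X₀ 0 := by
  simpa using hY.smul 0

lemma MM.sum_mem {Y₀ : Phase V → Phase V} (hY₀ : MM Vstar X₀ Y₀) {ι : Type*} (s : Finset ι)
    (Y : ι → Phase V → Phase V) (h : ∀ i ∈ s, MM Vstar X₀ (Y i)) :
    MM Vstar X₀ (∑ i ∈ s, Y i) :=
  Finset.sum_induction Y (MM Vstar X₀) (fun _ _ => MM.add) hY₀.zero_mem h

lemma derivField_mem (G : SimpleGraph V) [DecidableRel G.Adj] (γ : V → ℝ) (U : V → ℝ → ℝ)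
    (Vp : V → V → Polynomial ℝ) (hU : ∀ v, ContDiff ℝ (⊤ : ℕ∞) (U v))
    (hsym : ∀ u v, G.Adj u v → ∀ x : ℝ, (Vp v u).eval x = (Vp u v).eval (-x))
    (c : V) (hc : Controllable Vstar (X0 G γ U Vp) c) (k : ℕ) :
    MM Vstar (X0 G γ U Vp)
      (polyField G c (fun v => derivative^[k] (derivative (derivative (Vp c v))))) := by
  induction k with
  | zero =>
    have hX := contDiff_X0 G γ U Vp hU
    have hg : ContDiff ℝ (⊤ : ℕ∞)
        (fun x => -(fderiv ℝ (X0 G γ U Vp) x (Pi.single c 1, 0)).2 c) := by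
      have h1 : ContDiff ℝ (⊤ : ℕ∞) (fun x => fderiv ℝ (X0 G γ U Vp) x (Pi.single c 1, 0)) :=
        (hX.fderiv_right (m := (⊤ : ℕ∞)) (by simp)).clm_apply contDiff_const
      have h2 : ContDiff ℝ (⊤ : ℕ∞) (fun y : Phase V => -y.2 c) := by fun_prop
      exact h2.comp h1
    -- the `∂_{p_c}`-component is removed with a smooth multiple of `∂_{p_c}`
    have h := (hc.1.lieX).add (hc.2.mulS _ hg)
    convert h using 1
    funext x
    have hq : fderiv ℝ (dq c) x = 0 := by unfold dq; simp
    obtain ⟨h1, h2⟩ := fderiv_X0_dq G γ U Vp hU hsym c x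
    ext v
    · simp [lieB, hq, h1, polyField, dp]
    · by_cases hv : v = c
      · subst hv
        simp [lieB, hq, polyField, dp, dq]
      · simp [lieB, hq, h2 v hv, dp, hv]
  | succ k ih =>
    have h := hc.1.lie ih
    rw [lieB_dq_polyField] at h
    simpa only [Function.iterate_succ_apply'] using h

/-- If `∑_v (β_v x_v + e_v) ∂_{p_v} ∈ 𝓜` with `β_v e_v = 0`, then
`∑_v β_v ^ (k+2) x_v ∂_{p_v} ∈ 𝓜` for all `k`. -/
lemma affField_pow_mem (G : SimpleGraph V) [DecidableRel G.Adj] (γ : V → ℝ) (U : V → ℝ → ℝ)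
    (Vp : V → V → Polynomial ℝ) (hU : ∀ v, ContDiff ℝ (⊤ : ℕ∞) (U v)) (c : V) (δ β e : V → ℝ)
    (hβc : β c = 0) (hec : e c = 0) (hβe : ∀ v, β v * e v = 0)
    (h : MM Vstar (X0 G γ U Vp) (affField c δ β e)) (k : ℕ) :
    MM Vstar (X0 G γ U Vp) (affField c δ (fun v => β v ^ (k + 2)) 0) := by
  have hW := h.lieX
  rw [lieB_affField_X0 G γ U Vp hU] at hW
  induction k with
  | zero =>
    have h2 := (h.lie hW).smul (1 / 2)
    rw [lieB_affField_driftField c γ δ β e β e hβc hec hβc hec] at h2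
    convert h2 using 1
    funext x
    ext v
    · simp [affField]
    · simp [affField, hβe]; ring
  | succ k ih =>
    have h2 := (ih.lie hW).smul (1 / 2)
    rw [lieB_affField_driftField c γ δ _ 0 β e (by simp [hβc]) rfl hβc hec] at h2
    convert h2 using 1
    funext x
    ext v
    · simp [affField]
    · have : β v ^ (k + 2) * e v = 0 := by rw [pow_succ, mul_assoc, hβe, mul_zero]
      simp [affField, this]; ring

/-- Lagrange interpolation on the values of `β` passes from powers to arbitrary functions of `β`
vanishing at `0`. -/
lemma affField_comp_mem (c : V) (δ β : V → ℝ)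
    (h : ∀ k : ℕ, MM Vstar X₀ (affField c δ (fun v => β v ^ (k + 2)) 0))
    (φ : ℝ → ℝ) (hφ : φ 0 = 0) :
    MM Vstar X₀ (affField c δ (fun v => φ (β v)) 0) := by
  set s : Finset ℝ := Finset.univ.image β
  set P : Polynomial ℝ := Lagrange.interpolate s id (fun y => φ y / y ^ 2) with hP
  have hPv : ∀ v, P.eval (β v) * β v ^ 2 = φ (β v) := by
    intro v
    have h1 : P.eval (id (β v)) = φ (β v) / β v ^ 2 :=
      Lagrange.eval_interpolate_at_node _ (Set.injOn_id _)
        (Finset.mem_image_of_mem β (Finset.mem_univ v))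
    rw [id] at h1
    rw [h1]
    by_cases h0 : β v = 0
    · simp [h0, hφ]
    · field_simp
  have hsum := (h 0).sum_mem (Finset.range (P.natDegree + 1))
    (fun k => P.coeff k • affField c δ (fun v => β v ^ (k + 2)) 0) fun k _ => (h k).smul _
  convert hsum using 1
  funext x
  ext v
  · simp [affField, Finset.sum_apply, Prod.fst_sum]
  · simp only [affField, Finset.sum_apply, Prod.snd_sum, Pi.smul_apply, Prod.smul_snd,
      Pi.zero_apply, add_zero, smul_eq_mul]
    rw [← hPv v, Polynomial.eval_eq_sum_range, Finset.sum_mul, Finset.sum_mul]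
    refine Finset.sum_congr rfl fun k _ => ?_
    ring

end Membership

/-! ### The polynomials `V''_{cv}` -/

lemma natDegree_adjRep (g : Polynomial ℝ) : (adjRep g).natDegree = g.natDegree := by
  simp [adjRep, natDegree_comp]

lemma leadingCoeff_adjRep (g : Polynomial ℝ) : (adjRep g).leadingCoeff = g.leadingCoeff := by
  unfold adjRep
  rw [leadingCoeff_comp (by simp)]
  simp

/-- The `(d-1)`-st derivative of a polynomial of degree at most `d = n + 1` is affine; in the adjusted
variable its constant term vanishes as soon as its slope does not. -/
lemma exists_affine_data (g : Polynomial ℝ) (n : ℕ) (hg : g.natDegree ≤ n + 1) :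
    ∃ e : ℝ, ((n + 1).factorial * g.coeff (n + 1)) * e = 0 ∧
      ∀ y, (derivative^[n] g).eval y =
        ((n + 1).factorial * g.coeff (n + 1)) * (y + adjShift g) + e := by
  have hdeg : (derivative^[n] g).natDegree ≤ 1 := by
    have := natDegree_iterate_derivative g n
    omega
  have heval : ∀ y, (derivative^[n] g).eval y =
      ((n + 1).factorial * g.coeff (n + 1)) * y + n.factorial * g.coeff n := by
    intro y
    rw [eq_X_add_C_of_natDegree_le_one hdeg]
    simp only [coeff_iterate_derivative, eval_add, eval_mul, eval_C, eval_X, nsmul_eq_mul]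
    rw [show 1 + n = n + 1 by ring, zero_add, Nat.descFactorial_self]
    have : (n + 1).descFactorial n = (n + 1).factorial := by
      rw [← Nat.descFactorial_self (n + 1), Nat.descFactorial_succ]; simp
    rw [this]
  refine ⟨n.factorial * g.coeff n - ((n + 1).factorial * g.coeff (n + 1)) * adjShift g, ?_,
    fun y => by rw [heval]; ring⟩
  by_cases h0 : g.coeff (n + 1) = 0
  · simp [h0]
  · have hd : g.natDegree = n + 1 := le_antisymm hg (le_natDegree_of_ne_zero h0)
    have hn : ((n : ℝ) + 1) ≠ 0 := by positivity
    rw [adjShift, leadingCoeff, hd, Nat.factorial_succ]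
    simp only [Nat.add_sub_cancel]
    push_cast
    field_simp
    ring

/-- Lemma 4.7 (i)–(ii). Assume `c` is controllable. Then for each
value `b ∈ B_d^d` (i.e. `b = b_{v₀d}` for some `v₀ ∈ D^d`), both
`∑_{v∈D^d : b_{vd}=b} x_v ∂_{p_v} ∈ 𝓜` and `∑_{v∈D^d : b_{vd}=b} ∂_{p_v} ∈ 𝓜`.
Consequently `∑_{v∈D^d} x_v ∂_{p_v} ∈ 𝓜` and `∑_{v∈D^d} ∂_{p_v} ∈ 𝓜`. -/
theorem top_degree_fields_mem
    {V : Type} [Fintype V] [DecidableEq V] (G : SimpleGraph V) [DecidableRel G.Adj]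
    (Vstar : Finset V) (γ : V → ℝ) (U : V → ℝ → ℝ) (Vp : V → V → Polynomial ℝ)
    (hγpos : ∀ v ∈ Vstar, 0 < γ v) (hγ0 : ∀ v ∉ Vstar, γ v = 0)
    (hU : ∀ v, ContDiff ℝ (⊤ : ℕ∞) (U v))
    (hsym : ∀ u v, G.Adj u v → ∀ x : ℝ, (Vp v u).eval x = (Vp u v).eval (-x))
    (hdeg : ∀ u v, G.Adj u v → 3 ≤ (Vp u v).natDegree)
    (c : V) (hc : Controllable Vstar (X0 G γ U Vp) c) :
    (∀ v₀ ∈ Dd G Vp c,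
      MM Vstar (X0 G γ U Vp)
        (fun x => ((0 : V → ℝ),
          ∑ v ∈ (Dd G Vp c).filter
              (fun v => bcoef Vp c v (dmax G Vp c) = bcoef Vp c v₀ (dmax G Vp c)),
            Pi.single v (xv Vp c v x))) ∧
      MM Vstar (X0 G γ U Vp)
        (dpSum ((Dd G Vp c).filter
          (fun v => bcoef Vp c v (dmax G Vp c) = bcoef Vp c v₀ (dmax G Vp c))))) ∧
    MM Vstar (X0 G γ U Vp)
      (fun x => ((0 : V → ℝ), ∑ v ∈ Dd G Vp c, Pi.single v (xv Vp c v x))) ∧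
    MM Vstar (X0 G γ U Vp) (dpSum (Dd G Vp c)) := by
  have hpack : ∃ β : V → ℝ, β c = 0 ∧ (∀ v ∈ Dd G Vp c, β v = bcoef Vp c v (dmax G Vp c)) ∧
      (∀ v, β v ≠ 0 ↔ v ∈ Dd G Vp c) ∧
      ∀ φ : ℝ → ℝ, φ 0 = 0 → MM Vstar (X0 G γ U Vp)
        (affField c (fun v => adjShift (derivative (derivative (Vp c v))))
          (fun v => φ (β v)) 0) := by
    by_cases hT : Tset G c = ∅
    · have hD : Dd G Vp c = ∅ := by simp [Dd, hT]
      refine ⟨0, rfl, by simp [hD], by simp [hD], fun φ hφ => ?_⟩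
      convert hc.1.zero_mem using 1
      funext x
      ext v <;> simp [affField, hφ]
    have hdegV : ∀ v, G.Adj c v → 1 ≤ (derivative (derivative (Vp c v))).natDegree := by
      intro v hv
      have := hdeg c v hv
      rw [natDegree_derivative, natDegree_derivative]
      omega
    have hle : ∀ v, G.Adj c v →
        (derivative (derivative (Vp c v))).natDegree ≤ dmax G Vp c := by
      intro v hv
      rw [← natDegree_adjRep]
      exact Finset.le_sup (f := fun v => (ft Vp c v).natDegree) (by simp [Tset, hv])
    obtain ⟨u, hu⟩ := Finset.nonempty_iff_ne_empty.2 hT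
    have hu' : G.Adj c u := by simpa [Tset] using hu
    obtain ⟨n, hn⟩ : ∃ n, dmax G Vp c = n + 1 :=
      Nat.exists_eq_succ_of_ne_zero (by have := hdegV u hu'; have := hle u hu'; omega)
    have hDd : ∀ v, v ∈ Dd G Vp c ↔
        G.Adj c v ∧ (derivative (derivative (Vp c v))).natDegree = n + 1 := by
      intro v
      simp [Dd, Tset, ft, natDegree_adjRep, hn]
    have hdata : ∀ v, ∃ e : ℝ, G.Adj c v →
        (((n + 1).factorial * (derivative (derivative (Vp c v))).coeff (n + 1)) * e = 0 ∧
        ∀ y, (derivative^[n] (derivative (derivative (Vp c v)))).eval y =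
          ((n + 1).factorial * (derivative (derivative (Vp c v))).coeff (n + 1)) *
            (y + adjShift (derivative (derivative (Vp c v)))) + e) := by
      intro v
      by_cases hv : G.Adj c v
      · obtain ⟨e, he⟩ := exists_affine_data _ n (hn ▸ hle v hv)
        exact ⟨e, fun _ => he⟩
      · exact ⟨0, fun h => absurd h hv⟩
    choose e he using hdata
    set β : V → ℝ := fun v => if G.Adj c v then
      (n + 1).factorial * (derivative (derivative (Vp c v))).coeff (n + 1) else 0 with hβ
    have hfield := derivField_mem G γ U Vp hU hsym c hc n
    have hZ : polyField G c (fun v => derivative^[n] (derivative (derivative (Vp c v)))) =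
        affField c (fun v => adjShift (derivative (derivative (Vp c v)))) β
          (fun v => if G.Adj c v then e v else 0) := by
      funext x
      ext v
      · rfl
      · by_cases hv : G.Adj c v
        · simp [polyField, affField, hβ, hv, (he v hv).2]
        · simp [polyField, affField, hβ, hv]
    rw [hZ] at hfield
    have hβc : β c = 0 := by simp [hβ]
    refine ⟨β, hβc, ?_, ?_, fun φ hφ => affField_comp_mem c _ β
      (affField_pow_mem G γ U Vp hU c _ β _ hβc (by simp) (fun v => ?_) hfield) φ hφ⟩
    · intro v hv
      obtain ⟨h1, h2⟩ := (hDd v).1 hv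
      have h3 := leadingCoeff_adjRep (derivative (derivative (Vp c v)))
      rw [leadingCoeff, leadingCoeff, natDegree_adjRep, h2] at h3
      simp [hβ, h1, bcoef, ft, hn, h3]
    · intro v
      rw [hDd]
      by_cases hv : G.Adj c v
      · simp only [hβ, hv, if_true, true_and]
        have hf : ((n + 1).factorial : ℝ) ≠ 0 := by positivity
        constructor
        · intro h
          exact le_antisymm (hn ▸ hle v hv) (le_natDegree_of_ne_zero (right_ne_zero_of_mul h))
        · intro h
          refine mul_ne_zero hf ?_
          rw [← h]
          refine leadingCoeff_ne_zero.2 fun h0 => ?_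
          simp [h0] at h
      · simp [hβ, hv]
    · by_cases hv : G.Adj c v
      · simpa [hβ, hv] using (he v hv).1
      · simp [hβ, hv]
  obtain ⟨β, hβc, hβb, hβD, hmem⟩ := hpack
  -- both conclusions, for any set of vertices cut out by a function of `β`
  have key : ∀ (A : Finset V) (φ : ℝ → ℝ), φ 0 = 0 → (∀ v, φ (β v) = if v ∈ A then 1 else 0) →
      MM Vstar (X0 G γ U Vp)
        (fun x => ((0 : V → ℝ), ∑ v ∈ A, Pi.single v (xv Vp c v x))) ∧
      MM Vstar (X0 G γ U Vp) (dpSum A) := by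
    intro A φ hφ hA
    have h1 := hmem φ hφ
    have h2 := hc.1.lie h1
    rw [lieB_dq_affField _ _ _ _ (by simp [hβc, hφ])] at h2
    constructor
    · convert h1 using 1
      funext x
      ext v
      · rfl
      · simp [affField, hA, xv, Finset.sum_apply, Finset.sum_pi_single]
    · convert h2 using 1
      funext x
      ext v
      · rfl
      · simp [dpSum, hA, Finset.sum_apply, Finset.sum_pi_single]
  refine ⟨fun v₀ hv₀ => ?_, ?_⟩
  · have hne : β v₀ ≠ 0 := (hβD v₀).2 hv₀
    refine key _ (fun y => if y = β v₀ then 1 else 0) (by simp [hne.symm]) fun v => ?_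
    by_cases hv : v ∈ Dd G Vp c
    · simp [hv, hβb v hv, hβb v₀ hv₀]
    · have h0 : β v = 0 := by_contra fun h => hv ((hβD v).1 h)
      simp [hv, h0, hne.symm]
  · refine key _ (fun y => if y ≠ 0 then 1 else 0) (by simp) fun v => ?_
    simp only [hβD v]
end
end
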